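/- Let 0<α≤1 and let {q_n : n≥0} be a non-increasing sequence of non-negative reals with q_0>0 satisfying n^α/Q_n = O(1) and (q_n − q_{n+1})/n^{α−2} = O(1) as n→∞. Then there exists a constant c_α such that for every N∈ℕ and every 1/(1+α)-atom a with support I_N (so ‖a‖_∞ ≤ M_N^{1+α} and ∫_{I_N} a dμ = 0): ∫_{G_m \ I_N} ( sup_{n > M_N} |t_n a(x)| / log^{1+α}(n+1) )^{1/(1+α)} dμ(x) ≤ c_α. -/

import Mathlib

open MeasureTheory Filter Finset Asymptotics
open scoped ENNReal NNReal

noncomputable section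

namespace Vilenkin

/-- The Vilenkin group `G_m`: the complete direct product of the cyclic groups `Z_{m_n}`. -/
abbrev G (m : ℕ → ℕ) := ∀ n, ZMod (m n)

/-- The generalized number system `M_0 = 1`, `M_{n+1} = m_n M_n`. -/
def MM (m : ℕ → ℕ) : ℕ → ℕ
  | 0 => 1
  | n + 1 => m n * MM m n

/-- The generalized Rademacher functions `r_k(x) = exp(2 π i x_k / m_k)`. -/
def rade (m : ℕ → ℕ) (k : ℕ) (x : G m) : ℂ :=
  Complex.exp (2 * Real.pi * Complex.I * ((x k).val : ℂ) / (m k : ℂ))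

/-- The Vilenkin system `ψ_n = ∏_k r_k^{n_k}`, where `n = ∑_k n_k M_k` is the expansion of `n`
in the generalized number system (the digits `n_k = (n / M_k) mod m_k` vanish for `k > n`). -/
def psi (m : ℕ → ℕ) (n : ℕ) (x : G m) : ℂ :=
  ∏ k ∈ Finset.range (n + 1), rade m k x ^ (n / MM m k % m k)

/-- The Dirichlet kernels `D_n = ∑_{k=0}^{n-1} ψ_k`. -/
def D (m : ℕ → ℕ) (n : ℕ) (x : G m) : ℂ := ∑ k ∈ Finset.range n, psi m k x

/-- The Fejér kernels `K_n = (1/n) ∑_{k=1}^{n} D_k`. -/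
def K (m : ℕ → ℕ) (n : ℕ) (x : G m) : ℂ := (n : ℂ)⁻¹ * ∑ k ∈ Finset.Icc 1 n, D m k x

/-- `Q_n = ∑_{k=0}^{n-1} q_k`. -/
def Q (q : ℕ → ℝ) (n : ℕ) : ℝ := ∑ k ∈ Finset.range n, q k

/-- The Nörlund kernels `F_n = (1/Q_n) ∑_{k=1}^{n} q_{n-k} D_k`. -/
def F (m : ℕ → ℕ) (q : ℕ → ℝ) (n : ℕ) (x : G m) : ℂ :=
  ((Q q n : ℝ) : ℂ)⁻¹ * ∑ k ∈ Finset.Icc 1 n, (q (n - k) : ℂ) * D m k x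

/-- The interval (cylinder) `I_n(x) = {y : y_j = x_j for all j < n}`. -/
def cyl (m : ℕ → ℕ) (n : ℕ) (x : G m) : Set (G m) := {y | ∀ j < n, y j = x j}

/-- The element `s_k e_k` of `G_m` (value `s_k` in coordinate `k`, zero elsewhere). -/
def oneSpike (m : ℕ → ℕ) (k sk : ℕ) : G m := fun j => if j = k then (sk : ZMod (m j)) else 0

/-- The element `s_k e_k + s_l e_l` of `G_m` (for `k ≠ l`). -/
def twoSpike (m : ℕ → ℕ) (k sk l sl : ℕ) : G m :=
  fun j => if j = k then (sk : ZMod (m j)) else if j = l then (sl : ZMod (m j)) else 0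

/-- The σ-algebra `𝔉_n` generated by the intervals `I_n(x)`, i.e. by the first `n`
coordinates. -/
def filt (m : ℕ → ℕ) (n : ℕ) : MeasurableSpace (G m) :=
  MeasurableSpace.comap (fun x (i : Fin n) => x i.val) inferInstance

/-- `f = (f^{(n)})` is a martingale with respect to the filtration `(𝔉_n)` and the measure `μ`. -/
def IsMartingale (m : ℕ → ℕ) (μ : Measure (G m)) (f : ℕ → G m → ℂ) : Prop :=
  (∀ n, Integrable (f n) μ) ∧ (∀ n, Measurable[filt m n] (f n)) ∧
    ∀ n, ∀ s : Set (G m), MeasurableSet[filt m n] s →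
      ∫ x in s, f (n + 1) x ∂μ = ∫ x in s, f n x ∂μ

/-- The `L_p`-quasinorm `(∫ g^p dμ)^{1/p}` of a nonnegative (extended-real-valued) function. -/
def lpNormE (m : ℕ → ℕ) (μ : Measure (G m)) (p : ℝ) (g : G m → ℝ≥0∞) : ℝ≥0∞ :=
  (∫⁻ x, g x ^ p ∂μ) ^ (1 / p)

/-- The martingale Hardy space quasinorm `‖f‖_{H_p} = ‖sup_n |f^{(n)}|‖_p`. -/
def HpNorm (m : ℕ → ℕ) (μ : Measure (G m)) (p : ℝ) (f : ℕ → G m → ℂ) : ℝ≥0∞ :=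
  lpNormE m μ p (fun x => ⨆ n, (‖f n x‖₊ : ℝ≥0∞))

/-- The Vilenkin-Fourier coefficients of a martingale:
`f̂(i) = lim_k ∫ f^{(k)} conj ψ_i dμ`. -/
def mcoef (m : ℕ → ℕ) (μ : Measure (G m)) (f : ℕ → G m → ℂ) (i : ℕ) : ℂ :=
  limUnder atTop fun k => ∫ x, f k x * (starRingEnd ℂ) (psi m i x) ∂μ

/-- The partial sums `S_n f = ∑_{k=0}^{n-1} f̂(k) ψ_k` of the Vilenkin-Fourier series of a
martingale. -/
def mS (m : ℕ → ℕ) (μ : Measure (G m)) (f : ℕ → G m → ℂ) (n : ℕ) (x : G m) : ℂ :=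
  ∑ k ∈ Finset.range n, mcoef m μ f k * psi m k x

/-- The Nörlund means `t_n f = (1/Q_n) ∑_{k=1}^{n} q_{n-k} S_k f` of a martingale. -/
def mT (m : ℕ → ℕ) (q : ℕ → ℝ) (μ : Measure (G m)) (f : ℕ → G m → ℂ) (n : ℕ) (x : G m) : ℂ :=
  ((Q q n : ℝ) : ℂ)⁻¹ * ∑ k ∈ Finset.Icc 1 n, (q (n - k) : ℂ) * mS m μ f k x

/-- The Cesàro numbers `A_0^α = 0`, `A_n^α = (α+1)⋯(α+n)/n!`. -/
def AC (α : ℝ) (n : ℕ) : ℝ :=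
  if n = 0 then 0 else (∏ j ∈ Finset.Icc 1 n, (α + (j : ℝ))) / (n.factorial : ℝ)

/-- The `(C,α)` (Cesàro) means `σ_n^α f = (1/A_n^α) ∑_{k=1}^{n} A_{n-k}^{α-1} S_k f` of a
martingale. -/
def mCes (m : ℕ → ℕ) (α : ℝ) (μ : Measure (G m)) (f : ℕ → G m → ℂ) (n : ℕ) (x : G m) : ℂ :=
  ((AC α n : ℝ) : ℂ)⁻¹ * ∑ k ∈ Finset.Icc 1 n, ((AC (α - 1) (n - k) : ℝ) : ℂ) * mS m μ f k x

/-- The Fejér means `σ_n f = (1/n) ∑_{k=1}^{n} S_k f` of a martingale. -/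
def mFej (m : ℕ → ℕ) (μ : Measure (G m)) (f : ℕ → G m → ℂ) (n : ℕ) (x : G m) : ℂ :=
  (n : ℂ)⁻¹ * ∑ k ∈ Finset.Icc 1 n, mS m μ f k x

/-- The Vilenkin-Fourier coefficients of an integrable function. -/
def fcoef (m : ℕ → ℕ) (μ : Measure (G m)) (g : G m → ℂ) (i : ℕ) : ℂ :=
  ∫ x, g x * (starRingEnd ℂ) (psi m i x) ∂μ

/-- The partial sums of the Vilenkin-Fourier series of an integrable function. -/
def fS (m : ℕ → ℕ) (μ : Measure (G m)) (g : G m → ℂ) (n : ℕ) (x : G m) : ℂ :=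
  ∑ k ∈ Finset.range n, fcoef m μ g k * psi m k x

/-- The Nörlund means of an integrable function. -/
def fT (m : ℕ → ℕ) (q : ℕ → ℝ) (μ : Measure (G m)) (g : G m → ℂ) (n : ℕ) (x : G m) : ℂ :=
  ((Q q n : ℝ) : ℂ)⁻¹ * ∑ k ∈ Finset.Icc 1 n, (q (n - k) : ℂ) * fS m μ g k x

/-!
The Nörlund mean `t_n a` is the convolution of `a` with the Nörlund kernel `F_n`. Let `k` be the
position of the first nonzero coordinate of `x`, and `l` that of the second one among the first `N`
(`l = N` if there is none). The characters sum to zero over blocks of length `M_{k+1}`, and the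
Dirichlet kernels over blocks of length `M_{l+1}`; hence `D_n(x) = O(M_k)`, while
`∑_{j < n} D_j(x) = O(M_k M_l)`. Splitting off the `M_l` largest weights and summing the rest by
parts gives `F_n(x) = O(M_k Q_{M_l} / Q_n)`, and the hypotheses on `q` make this
`O(M_k (M_l / n)^α)`.

For `a` supported in `I_N` and bounded by `M_N^{1+α}`, it follows that `t_n a(x) = O(M_k M_l^α)`
for `n > M_N`. The set of points with given `k` and `l` has measure `O(1 / M_l)`, so it contributes
`O((M_k / M_l)^{1/(1+α)} / N)` to the integral, the factor `1 / N` coming from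
`log (n + 1) ≥ N log 2`. The sum over `k < l ≤ N` is therefore bounded.
-/

section GeneralizedNumberSystem

variable {m : ℕ → ℕ}

lemma MM_succ (n : ℕ) : MM m (n + 1) = m n * MM m n := rfl

lemma MM_pos [∀ n, NeZero (m n)] (n : ℕ) : 0 < MM m n := by
  induction n with
  | zero => exact one_pos
  | succ n ih => exact Nat.mul_pos (NeZero.pos _) ih

lemma cast_MM_pos [∀ n, NeZero (m n)] (n : ℕ) : (0 : ℝ) < MM m n := Nat.cast_pos.2 (MM_pos n)

lemma MM_dvd_MM {k s : ℕ} (h : k ≤ s) : MM m k ∣ MM m s := by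
  induction s, h using Nat.le_induction with
  | base => exact dvd_rfl
  | succ n _ ih => exact ih.mul_left _

lemma MM_mono [∀ n, NeZero (m n)] : Monotone (MM m) :=
  fun _ s h => Nat.le_of_dvd (MM_pos s) (MM_dvd_MM h)

lemma MM_succ_le {B : ℕ} (hB : ∀ n, m n ≤ B) (k : ℕ) : MM m (k + 1) ≤ B * MM m k :=
  Nat.mul_le_mul_right _ (hB k)

lemma two_pow_mul_MM_le [∀ n, (m n).AtLeastTwo] {k s : ℕ} (h : k ≤ s) :
    2 ^ (s - k) * MM m k ≤ MM m s := by
  induction s, h using Nat.le_induction with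
  | base => simp
  | succ n hn ih =>
    calc 2 ^ (n + 1 - k) * MM m k = 2 * (2 ^ (n - k) * MM m k) := by
          rw [Nat.sub_add_comm hn, pow_succ]; ring
      _ ≤ m n * MM m n := Nat.mul_le_mul Nat.AtLeastTwo.prop ih

lemma two_pow_le_MM [∀ n, (m n).AtLeastTwo] (k : ℕ) : 2 ^ k ≤ MM m k := by
  simpa [MM] using two_pow_mul_MM_le (m := m) k.zero_le

lemma digit_eq_zero_of_lt_MM {v s k : ℕ} [∀ n, NeZero (m n)] (hv : v < MM m s) (hsk : s ≤ k) :
    v / MM m k % m k = 0 := by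
  rw [Nat.div_eq_of_lt (hv.trans_le (MM_mono hsk)), Nat.zero_mod]

lemma mul_MM_add_div_of_le [∀ n, NeZero (m n)] (c : ℕ) {v s k : ℕ} (hv : v < MM m s)
    (hsk : s ≤ k) : (c * MM m s + v) / MM m k = c * MM m s / MM m k := by
  obtain ⟨e, he⟩ := MM_dvd_MM (m := m) hsk
  rw [he, ← Nat.div_div_eq_div_mul, ← Nat.div_div_eq_div_mul, mul_comm c,
    Nat.mul_add_div (MM_pos s), Nat.div_eq_of_lt hv, add_zero, Nat.mul_div_cancel_left _ (MM_pos s)]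

lemma digit_mul_MM_add [∀ n, NeZero (m n)] (c : ℕ) {v s : ℕ} (hv : v < MM m s) (k : ℕ) :
    (c * MM m s + v) / MM m k % m k = c * MM m s / MM m k % m k + v / MM m k % m k := by
  rcases lt_or_ge k s with hks | hsk
  · obtain ⟨e, he⟩ := MM_dvd_MM (m := m) (Nat.succ_le_of_lt hks)
    have hc : c * MM m s = MM m k * (m k * (c * e)) := by rw [he, MM_succ]; ring
    rw [hc, Nat.mul_add_div (MM_pos k), Nat.mul_add_mod, Nat.mul_div_cancel_left _ (MM_pos k),
      Nat.mul_mod_right, zero_add]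
  · rw [mul_MM_add_div_of_le c hv hsk, digit_eq_zero_of_lt_MM hv hsk, add_zero]

lemma digit_mul_MM_self [∀ n, NeZero (m n)] {u s : ℕ} (hu : u < m s) :
    u * MM m s / MM m s % m s = u := by
  rw [Nat.mul_div_cancel _ (MM_pos s), Nat.mod_eq_of_lt hu]

lemma digit_mul_MM_of_ne [∀ n, NeZero (m n)] {u s k : ℕ} (hu : u < m s) (hks : k ≠ s) :
    u * MM m s / MM m k % m k = 0 := by
  rcases lt_or_gt_of_ne hks with hks | hsk
  · obtain ⟨e, he⟩ := MM_dvd_MM (m := m) (Nat.succ_le_of_lt hks)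
    rw [show u * MM m s = MM m k * (m k * (u * e)) by rw [he, MM_succ]; ring,
      Nat.mul_div_cancel_left _ (MM_pos k), Nat.mul_mod_right]
  · exact digit_eq_zero_of_lt_MM (Nat.mul_lt_mul_of_pos_right hu (MM_pos s)) hsk

end GeneralizedNumberSystem

section Characters

variable {m : ℕ → ℕ} [∀ n, NeZero (m n)]

lemma rade_eq_stdAddChar (k : ℕ) (x : G m) : rade m k x = ZMod.stdAddChar (x k) := by
  rw [ZMod.stdAddChar_apply, ZMod.toCircle_apply, rade]

lemma rade_sub (k : ℕ) (x t : G m) :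
    rade m k (x - t) = rade m k x * (starRingEnd ℂ) (rade m k t) := by
  rw [rade_eq_stdAddChar, Pi.sub_apply, sub_eq_add_neg, AddChar.map_add_eq_mul,
    AddChar.map_neg_eq_conj, ← rade_eq_stdAddChar, ← rade_eq_stdAddChar]

lemma norm_rade (k : ℕ) (x : G m) : ‖rade m k x‖ = 1 := by
  rw [rade_eq_stdAddChar, AddChar.norm_apply]

lemma rade_pow_eq_one (k : ℕ) (x : G m) : rade m k x ^ m k = 1 := by
  rw [rade_eq_stdAddChar, ← AddChar.map_nsmul_eq_pow, nsmul_eq_mul, ZMod.natCast_self, zero_mul,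
    AddChar.map_zero_eq_one]

lemma rade_ne_one {k : ℕ} {x : G m} (hx : x k ≠ 0) : rade m k x ≠ 1 := by
  rw [rade_eq_stdAddChar, ← AddChar.map_zero_eq_one (ZMod.stdAddChar (N := m k))]
  exact ZMod.injective_stdAddChar.ne hx

lemma sum_rade_pow_eq_zero {k : ℕ} {x : G m} (hx : x k ≠ 0) :
    ∑ u ∈ range (m k), rade m k x ^ u = 0 := by
  rw [geom_sum_eq (rade_ne_one hx), rade_pow_eq_one, sub_self, zero_div]

lemma norm_psi (n : ℕ) (x : G m) : ‖psi m n x‖ = 1 := by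
  simp [psi, norm_rade]

lemma psi_sub (n : ℕ) (x t : G m) :
    psi m n (x - t) = psi m n x * (starRingEnd ℂ) (psi m n t) := by
  simp only [psi, rade_sub, mul_pow, prod_mul_distrib, map_prod, map_pow]

end Characters

section BlockSums

lemma sum_range_mul_eq_sum_sum {M : Type*} [AddCommMonoid M] (f : ℕ → M) (a b : ℕ) :
    ∑ i ∈ range (a * b), f i = ∑ u ∈ range a, ∑ v ∈ range b, f (u * b + v) := by
  induction a with
  | zero => simp
  | succ a ih => rw [Nat.succ_mul, sum_range_add, ih, sum_range_succ]

lemma sum_range_mul_eq_zero_of_factor {R : Type*} [CommSemiring R] {f g h : ℕ → R} {a b : ℕ}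
    (hh : ∑ u ∈ range a, h u = 0)
    (hf : ∀ c, ∀ u < a, ∀ v < b, f ((c * a + u) * b + v) = g c * h u * f v) (c : ℕ) :
    ∑ i ∈ range (c * (a * b)), f i = 0 := by
  rw [sum_range_mul_eq_sum_sum]
  refine sum_eq_zero fun j _ => ?_
  calc ∑ i ∈ range (a * b), f (j * (a * b) + i)
      = ∑ u ∈ range a, ∑ v ∈ range b, f ((j * a + u) * b + v) := by
        rw [sum_range_mul_eq_sum_sum]
        refine sum_congr rfl fun u _ => sum_congr rfl fun v _ => ?_
        congr 1
        ring
    _ = ∑ u ∈ range a, ∑ v ∈ range b, g j * h u * f v :=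
        sum_congr rfl fun u hu => sum_congr rfl fun v hv =>
          hf j u (mem_range.1 hu) v (mem_range.1 hv)
    _ = g j * (∑ u ∈ range a, h u) * ∑ v ∈ range b, f v := by
        rw [mul_sum (range a), sum_mul_sum]
    _ = 0 := by rw [hh, mul_zero, zero_mul]

lemma norm_sum_range_le_of_sum_range_mul_eq_zero {E : Type*} [SeminormedAddCommGroup E]
    {f : ℕ → E} {b : ℕ} {L : ℝ} (hb : 0 < b) (hzero : ∀ c, ∑ i ∈ range (c * b), f i = 0)
    (hL : ∀ i, ‖f i‖ ≤ L) (n : ℕ) : ‖∑ i ∈ range n, f i‖ ≤ b * L := by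
  have hL0 : 0 ≤ L := (norm_nonneg _).trans (hL 0)
  rw [← Nat.div_add_mod' n b, sum_range_add, hzero, zero_add]
  calc ‖∑ i ∈ range (n % b), f (n / b * b + i)‖ ≤ ∑ _i ∈ range (n % b), L :=
        norm_sum_le_of_le _ fun i _ => hL _
    _ = (n % b : ℕ) * L := by rw [sum_const, card_range, nsmul_eq_mul]
    _ ≤ b * L := by gcongr; exact (Nat.mod_lt n hb).le

end BlockSums

section DirichletKernels

variable {m : ℕ → ℕ} [∀ n, (m n).AtLeastTwo]

lemma psi_eq_prod_range {n R : ℕ} (h : n < R) (x : G m) :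
    psi m n x = ∏ k ∈ range R, rade m k x ^ (n / MM m k % m k) := by
  refine prod_subset (range_mono h) fun k _ hk => ?_
  have hnk : n < MM m k :=
    calc n < k := by simpa [Nat.succ_le_iff] using hk
      _ < 2 ^ k := Nat.lt_two_pow_self
      _ ≤ MM m k := two_pow_le_MM k
  rw [digit_eq_zero_of_lt_MM hnk le_rfl, pow_zero]

lemma psi_mul_MM_add (c : ℕ) {v s : ℕ} (hv : v < MM m s) (x : G m) :
    psi m (c * MM m s + v) x = psi m (c * MM m s) x * psi m v x := by
  have hlt : c * MM m s + v < c * MM m s + v + 1 := Nat.lt_succ_self _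
  rw [psi_eq_prod_range hlt, psi_eq_prod_range ((Nat.le_add_right _ _).trans_lt hlt),
    psi_eq_prod_range ((Nat.le_add_left _ _).trans_lt hlt), ← prod_mul_distrib]
  exact prod_congr rfl fun k _ => by rw [digit_mul_MM_add c hv, pow_add]

lemma psi_mul_MM {u s : ℕ} (hu : u < m s) (x : G m) :
    psi m (u * MM m s) x = rade m s x ^ u := by
  rw [psi_eq_prod_range (R := u * MM m s + s + 1) (by lia),
    prod_eq_single_of_mem s (mem_range.2 (by lia)), digit_mul_MM_self hu]
  intro k _ hks
  rw [digit_mul_MM_of_ne hu hks, pow_zero]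

lemma psi_block (s c : ℕ) {u v : ℕ} (hu : u < m s) (hv : v < MM m s) (x : G m) :
    psi m ((c * m s + u) * MM m s + v) x =
      psi m (c * MM m (s + 1)) x * rade m s x ^ u * psi m v x := by
  have hu' : u * MM m s < MM m (s + 1) := Nat.mul_lt_mul_of_pos_right hu (MM_pos s)
  rw [psi_mul_MM_add _ hv, show (c * m s + u) * MM m s = c * MM m (s + 1) + u * MM m s by
    rw [MM_succ]; ring, psi_mul_MM_add c hu', psi_mul_MM hu]

variable {x : G m} {k : ℕ}

lemma D_mul_MM_eq_zero (hk : x k ≠ 0) (c : ℕ) : D m (c * MM m (k + 1)) x = 0 :=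
  sum_range_mul_eq_zero_of_factor (sum_rade_pow_eq_zero hk)
    (fun c _ hu _ hv => psi_block k c hu hv x) c

lemma norm_D_le (hk : x k ≠ 0) (n : ℕ) : ‖D m n x‖ ≤ MM m (k + 1) := by
  simpa using! norm_sum_range_le_of_sum_range_mul_eq_zero (MM_pos (k + 1)) (D_mul_MM_eq_zero hk)
    (fun i => (norm_psi i x).le) n

lemma D_block {l : ℕ} (hkl : k < l) (hk : x k ≠ 0) (c : ℕ) {u v : ℕ} (hu : u < m l)
    (hv : v < MM m l) :
    D m ((c * m l + u) * MM m l + v) x =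
      psi m (c * MM m (l + 1)) x * rade m l x ^ u * D m v x := by
  have hzero : D m ((c * m l + u) * MM m l) x = 0 := by
    obtain ⟨e, he⟩ := MM_dvd_MM (m := m) (Nat.succ_le_of_lt hkl)
    rw [he, mul_comm (MM m (k + 1)), ← mul_assoc]
    exact D_mul_MM_eq_zero hk _
  rw [D] at hzero
  rw [D, sum_range_add, hzero, zero_add, D, mul_sum]
  exact sum_congr rfl fun i hi => psi_block l c hu ((mem_range.1 hi).trans hv) x

lemma norm_sum_D_le {l : ℕ} (hkl : k < l) (hk : x k ≠ 0) (hl : x l ≠ 0) (n : ℕ) :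
    ‖∑ j ∈ range n, D m j x‖ ≤ MM m (l + 1) * MM m (k + 1) :=
  norm_sum_range_le_of_sum_range_mul_eq_zero (MM_pos (l + 1))
    (sum_range_mul_eq_zero_of_factor (sum_rade_pow_eq_zero hl)
      fun c _ hu _ hv => D_block hkl hk c hu hv)
    (norm_D_le hk) n

end DirichletKernels

section WeightedSums

lemma norm_sum_smul_le_of_monotone {E : Type*} [SeminormedAddCommGroup E] [NormedSpace ℝ E]
    {c : ℕ → ℝ} (hc : Monotone c) (hc0 : ∀ j, 0 ≤ c j) {d : ℕ → E} {L : ℝ}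
    (hL : ∀ n, ‖∑ j ∈ range n, d j‖ ≤ L) (n : ℕ) :
    ‖∑ j ∈ range n, c j • d j‖ ≤ 2 * c (n - 1) * L := by
  have hL0 : 0 ≤ L := (norm_nonneg _).trans (hL 0)
  have hstep (j : ℕ) : 0 ≤ c (j + 1) - c j := sub_nonneg.2 (hc j.le_succ)
  have hlast : ‖c (n - 1) • ∑ j ∈ range n, d j‖ ≤ c (n - 1) * L := by
    rw [norm_smul, Real.norm_of_nonneg (hc0 _)]
    exact mul_le_mul_of_nonneg_left (hL n) (hc0 _)
  have hdiff : ‖∑ j ∈ range (n - 1), (c (j + 1) - c j) • ∑ i ∈ range (j + 1), d i‖ ≤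
      ∑ j ∈ range (n - 1), (c (j + 1) - c j) * L := by
    refine norm_sum_le_of_le _ fun j _ => ?_
    rw [norm_smul, Real.norm_of_nonneg (hstep j)]
    exact mul_le_mul_of_nonneg_left (hL _) (hstep j)
  calc ‖∑ j ∈ range n, c j • d j‖
      ≤ c (n - 1) * L + ∑ j ∈ range (n - 1), (c (j + 1) - c j) * L := by
        rw [sum_range_by_parts]
        exact (norm_sub_le _ _).trans (add_le_add hlast hdiff)
    _ = 2 * c (n - 1) * L - c 0 * L := by rw [← sum_mul, sum_range_sub]; ring
    _ ≤ 2 * c (n - 1) * L := sub_le_self _ (mul_nonneg (hc0 0) hL0)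

variable {E : Type*} [SeminormedAddCommGroup E] [NormedSpace ℝ E] {q : ℕ → ℝ} {d : ℕ → E}
  {A S : ℝ}

lemma natCast_mul_le_Q (hq : Antitone q) (n : ℕ) : n * q n ≤ Q q n := by
  simpa [Q] using card_nsmul_le_sum (range n) q (q n) fun i hi => hq (mem_range.1 hi).le

lemma Q_nonneg (hq : ∀ n, 0 ≤ q n) (n : ℕ) : 0 ≤ Q q n :=
  sum_nonneg fun i _ => hq i

lemma Q_pos (hq0 : 0 < q 0) (hq : ∀ n, 0 ≤ q n) {n : ℕ} (hn : 0 < n) : 0 < Q q n :=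
  sum_pos' (fun i _ => hq i) ⟨0, mem_range.2 hn, hq0⟩

lemma norm_sum_weight_smul_le (hq : ∀ n, 0 ≤ q n) (hA : ∀ j, ‖d j‖ ≤ A) (n : ℕ) :
    ‖∑ j ∈ range n, q (n - 1 - j) • d j‖ ≤ Q q n * A := by
  rw [Q, ← sum_range_reflect q, sum_mul]
  refine norm_sum_le_of_le _ fun j _ => ?_
  rw [norm_smul, Real.norm_of_nonneg (hq _)]
  exact mul_le_mul_of_nonneg_left (hA j) (hq _)

/- The last `L` terms carry the largest weights and are bounded termwise; the weights of the
others are at most `q L ≤ Q q L / L`, and summation by parts exploits the partial sums there. -/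
lemma norm_sum_weight_smul_le_of_antitone (hq : ∀ n, 0 ≤ q n) (hqm : Antitone q)
    (hA : ∀ j, ‖d j‖ ≤ A) (hS : 0 ≤ S) {L n : ℕ} (hLn : L ≤ n)
    (hd : ∀ n, ‖∑ j ∈ range n, d j‖ ≤ L * S) :
    ‖∑ j ∈ range n, q (n - 1 - j) • d j‖ ≤ Q q L * (A + 2 * S) := by
  obtain ⟨R, rfl⟩ := Nat.exists_eq_add_of_le' hLn
  have hhead : ‖∑ j ∈ range R, q (R + L - 1 - j) • d j‖ ≤ Q q L * (2 * S) := by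
    rcases R.eq_zero_or_pos with rfl | hR
    · simpa using mul_nonneg (Q_nonneg hq L) (mul_nonneg zero_le_two hS)
    have habel := norm_sum_smul_le_of_monotone (c := fun j => q (R + L - 1 - j))
      (fun i j hij => hqm (by lia)) (fun _ => hq _) hd R
    rw [show R + L - 1 - (R - 1) = L by lia] at habel
    calc ‖∑ j ∈ range R, q (R + L - 1 - j) • d j‖ ≤ L * q L * (2 * S) := by linarith
      _ ≤ Q q L * (2 * S) := by gcongr; exact natCast_mul_le_Q hqm L
  have htail : ‖∑ j ∈ range L, q (R + L - 1 - (R + j)) • d (R + j)‖ ≤ Q q L * A := by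
    have hindex (j : ℕ) : R + L - 1 - (R + j) = L - 1 - j := by lia
    simpa only [hindex] using
      norm_sum_weight_smul_le hq (fun j => hA (R + j)) L
  rw [sum_range_add]
  linarith [norm_add_le (∑ j ∈ range R, q (R + L - 1 - j) • d j)
    (∑ j ∈ range L, q (R + L - 1 - (R + j)) • d (R + j))]

end WeightedSums

section PartialSumGrowth

variable {α : ℝ} {q : ℕ → ℝ}

lemma rpow_sub_one_le_slope {s x : ℝ} (hs0 : s ≠ 0) (hs1 : s ≤ 1) (hx : 0 ≤ x)
    (hxs : 0 < x ∨ 0 < s) : (x + 1) ^ (s - 1) ≤ ((x + 1) ^ s - x ^ s) / s := by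
  have hcont : ContinuousOn (fun y : ℝ => y ^ s) (Set.Icc x (x + 1)) :=
    continuousOn_id.rpow_const fun y hy => hxs.imp (fun h => (h.trans_le hy.1).ne') le_of_lt
  obtain ⟨c, ⟨hxc, hcx⟩, hc⟩ := exists_hasDerivAt_eq_slope (fun y : ℝ => y ^ s)
    (fun y => s * y ^ (s - 1)) (lt_add_one x) hcont
    fun y hy => Real.hasDerivAt_rpow_const (Or.inl (hx.trans_lt hy.1).ne')
  have hmean : c ^ (s - 1) = ((x + 1) ^ s - x ^ s) / s := by
    rw [eq_div_iff hs0, mul_comm, hc, add_sub_cancel_left, div_one]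
  rw [← hmean]
  exact Real.rpow_le_rpow_of_nonpos (hx.trans_lt hxc) hcx.le (sub_nonpos.2 hs1)

lemma rpow_sub_two_le_slope (hα0 : 0 ≤ α) (hα1 : α < 1) {x : ℝ} (hx : 1 ≤ x) :
    x ^ (α - 2) ≤ 4 / (1 - α) * (x ^ (α - 1) - (x + 1) ^ (α - 1)) := by
  have hx0 : 0 < x := by linarith
  have hdouble : x ^ (α - 2) ≤ 4 * (x + 1) ^ (α - 2) :=
    calc x ^ (α - 2) = 2 ^ (2 - α) * (2 * x) ^ (α - 2) := by
          rw [Real.mul_rpow zero_le_two hx0.le, ← mul_assoc, ← Real.rpow_add two_pos]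
          simp
      _ ≤ 2 ^ (2 : ℝ) * (x + 1) ^ (α - 2) := by
          gcongr ?_ * ?_
          · exact Real.rpow_le_rpow_of_exponent_le one_le_two (by linarith)
          · exact Real.rpow_le_rpow_of_nonpos (by linarith) (by linarith) (by linarith)
      _ = 4 * (x + 1) ^ (α - 2) := by norm_num
  have hslope := rpow_sub_one_le_slope (s := α - 1) (by linarith) (by linarith) hx0.le (.inl hx0)
  calc x ^ (α - 2) ≤ 4 * (((x + 1) ^ (α - 1) - x ^ (α - 1)) / (α - 1)) := by
        refine hdouble.trans ?_
        rw [show α - 2 = α - 1 - 1 by ring]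
        gcongr
    _ = 4 / (1 - α) * (x ^ (α - 1) - (x + 1) ^ (α - 1)) := by
        rw [← neg_sub 1 α, div_neg]
        ring

lemma exists_le_add_mul_rpow (hα0 : 0 ≤ α) (hα1 : α ≤ 1) (hq : ∀ n, 0 ≤ q n) (hqm : Antitone q)
    (hq' : (fun n : ℕ => (q n - q (n + 1)) / (n : ℝ) ^ (α - 2)) =O[atTop] (fun _ => (1 : ℝ))) :
    ∃ C : ℝ, 0 ≤ C ∧ ∀ j n : ℕ, 0 < j → j ≤ n → q j ≤ q n + C * (j : ℝ) ^ (α - 1) := by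
  rcases hα1.eq_or_lt with rfl | hlt
  · refine ⟨q 0, hq 0, fun j n _ _ => ?_⟩
    rw [sub_self, Real.rpow_zero, mul_one]
    exact (hqm j.zero_le).trans (le_add_of_nonneg_left (hq n))
  obtain ⟨C, hC⟩ := isBigO_one_nat_atTop_iff.1 hq'
  have hC0 : 0 ≤ C := (norm_nonneg _).trans (hC 0)
  have : 0 < 1 - α := sub_pos.2 hlt
  set C' : ℝ := C * (4 / (1 - α))
  have hstep (i : ℕ) (hi : 0 < i) :
      q i - q (i + 1) ≤ C' * ((i : ℝ) ^ (α - 1) - ((i + 1 : ℕ) : ℝ) ^ (α - 1)) :=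
    calc q i - q (i + 1) ≤ C * (i : ℝ) ^ (α - 2) :=
          (div_le_iff₀ (by positivity)).1 ((le_abs_self _).trans (hC i))
      _ ≤ C * (4 / (1 - α) * ((i : ℝ) ^ (α - 1) - (i + 1) ^ (α - 1))) := by
          gcongr
          exact rpow_sub_two_le_slope hα0 hlt (by exact_mod_cast hi)
      _ = _ := by push_cast; ring
  refine ⟨C', by positivity, fun j n hj hjn => ?_⟩
  have htelescope : q j + C' * (n : ℝ) ^ (α - 1) ≤ q n + C' * (j : ℝ) ^ (α - 1) := by
    induction n, hjn using Nat.le_induction with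
    | base => exact le_rfl
    | succ n hn ih => linarith [hstep n (hj.trans_le hn)]
  have : 0 ≤ C' * (n : ℝ) ^ (α - 1) := by positivity
  linarith

lemma Q_succ_le (hα0 : 0 < α) (hα1 : α ≤ 1) {C : ℝ} (hC : 0 ≤ C) {n : ℕ}
    (hqn : ∀ j, 0 < j → j ≤ n → q j ≤ q n + C * (j : ℝ) ^ (α - 1)) {j : ℕ} (hj : j ≤ n) :
    Q q (j + 1) ≤ q 0 + j * q n + C / α * (j : ℝ) ^ α := by
  induction j with
  | zero => simp [Q, Real.zero_rpow hα0.ne']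
  | succ j ih =>
    have hslope := rpow_sub_one_le_slope hα0.ne' hα1 j.cast_nonneg (.inr hα0)
    have hterm : C * ((j + 1 : ℕ) : ℝ) ^ (α - 1) ≤
        C / α * (((j + 1 : ℕ) : ℝ) ^ α - (j : ℝ) ^ α) := by
      rw [div_mul_eq_mul_div, mul_div_assoc]
      push_cast
      gcongr
    rw [Q, sum_range_succ, ← Q]
    have := ih (by lia)
    have := hqn (j + 1) j.succ_pos hj
    push_cast at *
    linarith

/- Both parts of the bound `q 0 + j * q n + O(j ^ α)` for `Q q j` are `O((j / n) ^ α * Q q n)`: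
the linear one since `n * q n ≤ Q q n`, the other one since `n ^ α = O(Q q n)`. -/
lemma exists_Q_le_mul_rpow (hα0 : 0 < α) (hα1 : α ≤ 1) (hq0 : 0 < q 0) (hq : ∀ n, 0 ≤ q n)
    (hqm : Antitone q)
    (hQ : (fun n : ℕ => (n : ℝ) ^ α / Q q n) =O[atTop] (fun _ => (1 : ℝ)))
    (hq' : (fun n : ℕ => (q n - q (n + 1)) / (n : ℝ) ^ (α - 2)) =O[atTop] (fun _ => (1 : ℝ))) :
    ∃ C : ℝ, ∀ j n : ℕ, 0 < j → j ≤ n → Q q j ≤ C * ((j : ℝ) / n) ^ α * Q q n := by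
  obtain ⟨C, hC0, hC⟩ := exists_le_add_mul_rpow hα0.le hα1 hq hqm hq'
  obtain ⟨C', hC'⟩ := isBigO_one_nat_atTop_iff.1 hQ
  refine ⟨1 + (q 0 + C / α) * C', fun j n hj hjn => ?_⟩
  have hn : 0 < n := hj.trans_le hjn
  have hQn : 0 < Q q n := Q_pos hq0 hq hn
  have hj1 : 1 ≤ (j : ℝ) ^ α := Real.one_le_rpow (by exact_mod_cast hj) hα0.le
  have hQj : Q q j ≤ j * q n + (q 0 + C / α) * (j : ℝ) ^ α :=
    calc Q q j ≤ Q q (j + 1) := by rw [Q, Q, sum_range_succ]; linarith [hq j]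
      _ ≤ q 0 * 1 + j * q n + C / α * (j : ℝ) ^ α := by
          rw [mul_one]; exact Q_succ_le hα0 hα1 hC0 (hC · n) hjn
      _ ≤ q 0 * (j : ℝ) ^ α + j * q n + C / α * (j : ℝ) ^ α := by gcongr
      _ = _ := by ring
  have hlinear : (j : ℝ) * q n ≤ ((j : ℝ) / n) ^ α * Q q n :=
    calc (j : ℝ) * q n = ((j : ℝ) / n) * (n * q n) := by field_simp
      _ ≤ ((j : ℝ) / n) ^ α * Q q n := by
          gcongr
          · exact mul_nonneg n.cast_nonneg (hq n)
          · refine Real.self_le_rpow_of_le_one (by positivity) ?_ hα1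
            exact div_le_one_of_le₀ (by exact_mod_cast hjn) n.cast_nonneg
          · exact natCast_mul_le_Q hqm n
  have hpower : (j : ℝ) ^ α ≤ C' * ((j : ℝ) / n) ^ α * Q q n :=
    calc (j : ℝ) ^ α = ((j : ℝ) / n) ^ α * (n : ℝ) ^ α := by
          rw [← Real.mul_rpow (by positivity) (by positivity), div_mul_cancel₀ _ (by positivity)]
      _ ≤ ((j : ℝ) / n) ^ α * (C' * Q q n) := by
          gcongr
          exact (div_le_iff₀ hQn).1 ((le_abs_self _).trans (hC' n))
      _ = _ := by ring
  calc Q q j ≤ j * q n + (q 0 + C / α) * (j : ℝ) ^ α := hQj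
    _ ≤ ((j : ℝ) / n) ^ α * Q q n + (q 0 + C / α) * (C' * ((j : ℝ) / n) ^ α * Q q n) := by
        gcongr
    _ = _ := by ring

end PartialSumGrowth

section Shells

variable {m : ℕ → ℕ} {N k l : ℕ} {x t : G m}

/-- The points whose coordinates before the `l`-th vanish except for the `k`-th, which does not, and
whose `l`-th coordinate does not vanish either unless `l = N`. For `k < l ≤ N` these sets partition
the complement of `I_N`: `k` and `l` are the positions of the first two nonzero coordinates among
the first `N`, with `l = N` if there is only one. -/
def shell (m : ℕ → ℕ) (N k l : ℕ) : Set (G m) :=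
  {x | x k ≠ 0 ∧ (∀ j < l, j ≠ k → x j = 0) ∧ (l < N → x l ≠ 0)}

lemma exists_mem_shell (hx : x ∉ cyl m N 0) : ∃ l ≤ N, ∃ k < l, x ∈ shell m N k l := by
  classical
  have hfirst : ∃ k, k < N ∧ x k ≠ 0 := by simpa [cyl] using hx
  obtain ⟨hkN, hxk⟩ := Nat.find_spec hfirst
  have hbefore : ∀ j < Nat.find hfirst, x j = 0 := fun j hj =>
    by_contra fun h => Nat.find_min hfirst hj ⟨hj.trans hkN, h⟩
  set k := Nat.find hfirst
  have hsecond : ∃ l, k < l ∧ (l < N → x l ≠ 0) := ⟨N, hkN, fun h => absurd h (lt_irrefl N)⟩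
  obtain ⟨hkl, hxl⟩ := Nat.find_spec hsecond
  have hbetween : ∀ j < Nat.find hsecond, k < j → x j = 0 := fun j hj hkj =>
    by_contra fun h => Nat.find_min hsecond hj ⟨hkj, fun _ => h⟩
  refine ⟨_, Nat.find_min' hsecond ⟨hkN, fun h => absurd h (lt_irrefl N)⟩, k, hkl, hxk,
    fun j hj hjk => ?_, hxl⟩
  exact hjk.lt_or_gt.elim (hbefore j) (hbetween j hj)

lemma compl_cyl_subset_iUnion_shell :
    (cyl m N 0)ᶜ ⊆ ⋃ i ∈ (range (N + 1)).sigma fun l => range l, shell m N i.2 i.1 := by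
  intro x hx
  obtain ⟨l, hlN, k, hkl, hmem⟩ := exists_mem_shell hx
  exact Set.mem_iUnion₂.2
    ⟨⟨l, k⟩, mem_sigma.2 ⟨mem_range_succ_iff.2 hlN, mem_range.2 hkl⟩, hmem⟩

lemma sub_mem_shell (hkl : k < l) (hlN : l ≤ N) (hx : x ∈ shell m N k l) (ht : t ∈ cyl m N 0) :
    x - t ∈ shell m N k l := by
  have hcoord (j : ℕ) (hj : j < N) : (x - t) j = x j := by
    rw [Pi.sub_apply, ht j hj, Pi.zero_apply, sub_zero]
  obtain ⟨hxk, hzero, hxl⟩ := hx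
  refine ⟨?_, fun j hj hjk => ?_, fun hl => ?_⟩
  · rwa [hcoord k (hkl.trans_le hlN)]
  · rw [hcoord j (hj.trans_le hlN), hzero j hj hjk]
  · rw [hcoord l hl]
    exact hxl hl

lemma shell_subset_iUnion_cyl :
    shell m N k l ⊆ ⋃ s : ZMod (m k), cyl m l (Function.update 0 k s) := by
  refine fun x hx => Set.mem_iUnion.2 ⟨x k, fun j hj => ?_⟩
  rcases eq_or_ne j k with rfl | hjk
  · rw [Function.update_self]
  · rw [Function.update_of_ne hjk, hx.2.1 j hj hjk, Pi.zero_apply]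

lemma measure_shell_le [∀ n, NeZero (m n)] {μ : Measure (G m)}
    (hμ : ∀ (n : ℕ) (x : G m), μ (cyl m n x) = ((MM m n : ℝ≥0∞))⁻¹) :
    μ (shell m N k l) ≤ ENNReal.ofReal (m k / MM m l) :=
  calc μ (shell m N k l) ≤ ∑ s : ZMod (m k), μ (cyl m l (Function.update 0 k s)) :=
        (measure_mono shell_subset_iUnion_cyl).trans (measure_iUnion_fintype_le _ _)
    _ = ENNReal.ofReal (m k / MM m l) := by
        simp only [hμ, sum_const, card_univ, ZMod.card, nsmul_eq_mul]
        rw [ENNReal.ofReal_div_of_pos (cast_MM_pos l), ENNReal.ofReal_natCast,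
          ENNReal.ofReal_natCast, div_eq_mul_inv]

lemma ofReal_mul_MM_mul_measure_shell_le [∀ n, NeZero (m n)] {μ : Measure (G m)} {B : ℕ}
    (hμ : ∀ (n : ℕ) (x : G m), μ (cyl m n x) = ((MM m n : ℝ≥0∞))⁻¹) (hB : ∀ n, m n ≤ B) {c : ℝ}
    (hc : 0 ≤ c) : ENNReal.ofReal (c * MM m l) * μ (shell m N k l) ≤ ENNReal.ofReal (c * B) := by
  have hMl : (0 : ℝ) < MM m l := cast_MM_pos l
  refine (mul_le_mul_right (measure_shell_le hμ) _).trans ?_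
  rw [← ENNReal.ofReal_mul (by positivity), mul_assoc, mul_div_cancel₀ _ hMl.ne']
  gcongr
  exact hB k

end Shells

section NorlundKernels

variable {m : ℕ → ℕ} {q : ℕ → ℝ}

lemma F_eq_smul_sum_range (n : ℕ) (x : G m) :
    F m q n x = (Q q n)⁻¹ • ∑ j ∈ range n, q (n - 1 - j) • D m (j + 1) x := by
  have hshift : ∑ i ∈ Icc 1 n, (q (n - i) : ℂ) * D m i x =
      ∑ j ∈ range n, q (n - 1 - j) • D m (j + 1) x := by
    rw [← Ico_add_one_right_eq_Icc, sum_Ico_eq_sum_range]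
    refine sum_congr rfl fun j _ => ?_
    rw [Complex.real_smul, Nat.sub_sub, add_comm j]
  rw [F, hshift, Complex.real_smul, Complex.ofReal_inv]

variable [∀ n, (m n).AtLeastTwo] {B : ℕ} {x : G m} {k l N n : ℕ}

lemma norm_F_le (hq0 : 0 < q 0) (hq : ∀ n, 0 ≤ q n) (hk : x k ≠ 0) (hn : 0 < n) :
    ‖F m q n x‖ ≤ MM m (k + 1) := by
  have hQn : 0 < Q q n := Q_pos hq0 hq hn
  rw [F_eq_smul_sum_range, norm_smul, norm_inv, Real.norm_of_nonneg hQn.le, inv_mul_le_iff₀ hQn]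
  exact norm_sum_weight_smul_le hq (fun j => norm_D_le hk (j + 1)) n

lemma norm_F_le_of_antitone (hB : ∀ n, m n ≤ B) (hq0 : 0 < q 0) (hq : ∀ n, 0 ≤ q n)
    (hqm : Antitone q) (hkl : k < l) (hk : x k ≠ 0) (hl : x l ≠ 0) (hn : MM m l ≤ n) :
    ‖F m q n x‖ ≤ Q q (MM m l) / Q q n * (B * (1 + 2 * B) * MM m k) := by
  have hQn : 0 < Q q n := Q_pos hq0 hq ((MM_pos l).trans_le hn)
  have hMk : (MM m (k + 1) : ℝ) ≤ B * MM m k := mod_cast MM_succ_le hB k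
  have hMl : (MM m (l + 1) : ℝ) ≤ B * MM m l := mod_cast MM_succ_le hB l
  have hD (j : ℕ) : ‖D m (j + 1) x‖ ≤ B * MM m k := (norm_D_le hk _).trans hMk
  have hsum (n : ℕ) : ‖∑ j ∈ range n, D m (j + 1) x‖ ≤ MM m l * (B * (B * MM m k)) :=
    calc ‖∑ j ∈ range n, D m (j + 1) x‖ = ‖∑ j ∈ range (n + 1), D m j x‖ := by
          rw [sum_range_succ', D, range_zero, sum_empty, add_zero]
      _ ≤ MM m (l + 1) * MM m (k + 1) := norm_sum_D_le hkl hk hl _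
      _ ≤ (B * MM m l) * (B * MM m k) := by gcongr
      _ = _ := by ring
  rw [F_eq_smul_sum_range, norm_smul, norm_inv, Real.norm_of_nonneg hQn.le, inv_mul_le_iff₀ hQn]
  calc ‖∑ j ∈ range n, q (n - 1 - j) • D m (j + 1) x‖
      ≤ Q q (MM m l) * (B * MM m k + 2 * (B * (B * MM m k))) :=
        norm_sum_weight_smul_le_of_antitone hq hqm hD (by positivity) hn hsum
    _ = _ := by field_simp

variable {α C : ℝ}

lemma one_le_of_Q_le_mul_rpow (hq0 : 0 < q 0)
    (hC : ∀ j n : ℕ, 0 < j → j ≤ n → Q q j ≤ C * ((j : ℝ) / n) ^ α * Q q n) : 1 ≤ C := by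
  simpa [Q, hq0] using hC 1 1 one_pos le_rfl

lemma norm_F_le_of_mem_shell (hB : ∀ n, m n ≤ B) (hα : 0 ≤ α) (hq0 : 0 < q 0)
    (hq : ∀ n, 0 ≤ q n) (hqm : Antitone q)
    (hC : ∀ j n : ℕ, 0 < j → j ≤ n → Q q j ≤ C * ((j : ℝ) / n) ^ α * Q q n)
    (hkl : k < l) (hlN : l ≤ N) (hx : x ∈ shell m N k l) (hn : MM m N ≤ n) :
    ‖F m q n x‖ ≤ B * (1 + 2 * B) * C * (MM m k * ((MM m l : ℝ) / MM m N) ^ α) := by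
  have hC1 : 1 ≤ C := one_le_of_Q_le_mul_rpow hq0 hC
  have hMN : (0 : ℝ) < MM m N := cast_MM_pos N
  obtain ⟨hxk, -, hxl⟩ := hx
  rcases hlN.eq_or_lt with rfl | hlt
  · have hMk : (MM m (k + 1) : ℝ) ≤ B * MM m k := mod_cast MM_succ_le hB k
    rw [div_self hMN.ne', Real.one_rpow, mul_one]
    calc ‖F m q n x‖ ≤ B * 1 * 1 * MM m k := by
          simpa using (norm_F_le hq0 hq hxk ((MM_pos l).trans_le hn)).trans hMk
      _ ≤ B * (1 + 2 * B) * C * MM m k := by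
          gcongr
          linarith [B.cast_nonneg (α := ℝ)]
  · have hln : MM m l ≤ n := (MM_mono hlN).trans hn
    have hratio : Q q (MM m l) / Q q n ≤ C * ((MM m l : ℝ) / MM m N) ^ α := by
      rw [div_le_iff₀ (Q_pos hq0 hq ((MM_pos l).trans_le hln))]
      refine (hC _ n (MM_pos l) hln).trans ?_
      gcongr
      exact Q_nonneg hq n
    calc ‖F m q n x‖ ≤ Q q (MM m l) / Q q n * (B * (1 + 2 * B) * MM m k) :=
          norm_F_le_of_antitone hB hq0 hq hqm hkl hxk (hxl hlt) hln
      _ ≤ C * ((MM m l : ℝ) / MM m N) ^ α * (B * (1 + 2 * B) * MM m k) := by gcongr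
      _ = _ := by ring

end NorlundKernels

section NorlundMeans

variable {m : ℕ → ℕ}

lemma measurable_psi (n : ℕ) : Measurable (psi m n) := by
  refine Finset.measurable_prod _ fun k _ => Measurable.pow_const ?_ _
  exact (Measurable.of_discrete (f := fun y : ZMod (m k) =>
    Complex.exp (2 * Real.pi * Complex.I * (y.val : ℂ) / (m k : ℂ)))).comp (measurable_pi_apply k)

lemma measurableSet_cyl (n : ℕ) (x : G m) : MeasurableSet (cyl m n x) := by
  simp only [cyl, Set.ofPred_forall]
  exact .iInter fun j => .iInter fun _ => measurable_pi_apply j (measurableSet_singleton _)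

variable [∀ n, NeZero (m n)] {q : ℕ → ℝ} {μ : Measure (G m)} {a : G m → ℂ}

lemma integrable_mul_psi_sub (ha : Integrable a μ) (i : ℕ) (x : G m) :
    Integrable (fun t => a t * psi m i (x - t)) μ := by
  refine ha.mul_bdd (c := 1) ?_ (.of_forall fun t => (norm_psi i _).le)
  simp only [psi_sub]
  exact (measurable_const.mul
    (Complex.continuous_conj.measurable.comp (measurable_psi i))).aestronglyMeasurable

lemma fS_eq_integral (ha : Integrable a μ) (n : ℕ) (x : G m) :
    fS m μ a n x = ∫ t, a t * D m n (x - t) ∂μ := by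
  simp only [D, mul_sum, fS, fcoef]
  rw [integral_finsetSum _ fun i _ => integrable_mul_psi_sub ha i x]
  refine sum_congr rfl fun i _ => ?_
  rw [← integral_mul_const]
  congr 1 with t
  rw [psi_sub]
  ring

lemma integrable_mul_D_sub (ha : Integrable a μ) (n : ℕ) (x : G m) :
    Integrable (fun t => a t * D m n (x - t)) μ := by
  simp only [D, mul_sum]
  exact integrable_finsetSum _ fun i _ => integrable_mul_psi_sub ha i x

lemma fT_eq_integral (ha : Integrable a μ) (n : ℕ) (x : G m) :
    fT m q μ a n x = ∫ t, a t * F m q n (x - t) ∂μ := by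
  simp only [F, mul_sum, mul_left_comm (a _), fT, fS_eq_integral ha]
  rw [integral_finsetSum _ fun k _ =>
    ((integrable_mul_D_sub ha k x).const_mul (q (n - k) : ℂ)).const_mul _]
  simp only [integral_const_mul]

lemma norm_fT_le [IsFiniteMeasure μ] (ha : Measurable a) {A E : ℝ} (hA : 0 ≤ A)
    (haA : eLpNorm a ⊤ μ ≤ ENNReal.ofReal A) {s : Set (G m)} (hs : MeasurableSet s)
    (has : Function.support a ⊆ s) {n : ℕ} {x : G m} (hE : ∀ t ∈ s, ‖F m q n (x - t)‖ ≤ E) :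
    ‖fT m q μ a n x‖ ≤ A * E * μ.real s := by
  have hae : ∀ᵐ t ∂μ, ‖a t‖ ≤ A := by
    filter_upwards [ae_le_eLpNormEssSup (f := a) (μ := μ)] with t ht
    rw [eLpNorm_exponent_top] at haA
    simpa [← ofReal_norm, ENNReal.ofReal_le_ofReal_iff hA] using ht.trans haA
  have hint : Integrable a μ := (integrable_const A).mono' ha.aestronglyMeasurable hae
  have hzero : ∀ t ∉ s, a t * F m q n (x - t) = 0 := fun t ht => by
    rw [Function.notMem_support.1 fun h => ht (has h), zero_mul]
  rw [fT_eq_integral hint, ← setIntegral_eq_integral_of_forall_compl_eq_zero hzero]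
  refine norm_setIntegral_le_of_norm_le_const_ae (measure_lt_top μ s) ?_
  rw [ae_restrict_iff' hs]
  filter_upwards [hae] with t ht hts
  rw [norm_mul]
  exact mul_le_mul ht (hE t hts) (norm_nonneg _) hA

end NorlundMeans

section MaximalFunction

lemma setLIntegral_le_sum_mul_measure {Ω ι : Type*} [MeasurableSpace Ω] {μ : Measure Ω}
    {s : Finset ι} {T : Set Ω} {A : ι → Set Ω} (hT : T ⊆ ⋃ i ∈ s, A i) {f : Ω → ℝ≥0∞}
    {b : ι → ℝ≥0∞} (hf : ∀ i ∈ s, ∀ x ∈ A i, f x ≤ b i) :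
    ∫⁻ x in T, f x ∂μ ≤ ∑ i ∈ s, b i * μ (A i) :=
  calc ∫⁻ x in T, f x ∂μ ≤ ∫⁻ x in ⋃ i : s, A i, f x ∂μ := by
        refine lintegral_mono_set (hT.trans_eq ?_)
        rw [Set.iUnion_subtype]
    _ ≤ ∑' i : s, ∫⁻ x in A i, f x ∂μ := lintegral_iUnion_le _ _
    _ = ∑ i ∈ s, ∫⁻ x in A i, f x ∂μ := by
        rw [tsum_fintype, sum_coe_sort s fun i => ∫⁻ x in A i, f x ∂μ]
    _ ≤ ∑ i ∈ s, b i * μ (A i) := sum_le_sum fun i hi => by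
        rw [← setLIntegral_const]
        exact setLIntegral_mono measurable_const (hf i hi)

lemma sum_range_pow_sub_le {r : ℝ} (hr0 : 0 ≤ r) (hr1 : r < 1) (l : ℕ) :
    ∑ k ∈ range l, r ^ (l - k) ≤ (1 - r)⁻¹ :=
  calc ∑ k ∈ range l, r ^ (l - k) ≤ ∑ k ∈ range (l + 1), r ^ (l - k) :=
        sum_le_sum_of_subset_of_nonneg (range_mono l.le_succ) fun _ _ _ => pow_nonneg hr0 _
    _ = ∑ k ∈ range (l + 1), r ^ k := sum_flip fun k => r ^ k
    _ ≤ ∑' k, r ^ k :=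
        (summable_geometric_of_lt_one hr0 hr1).sum_le_tsum _ fun _ _ => pow_nonneg hr0 _
    _ = (1 - r)⁻¹ := tsum_geometric_of_lt_one hr0 hr1

lemma sum_sum_range_pow_sub_le {r : ℝ} (hr0 : 0 ≤ r) (hr1 : r < 1) {N : ℕ} (hN : 0 < N) :
    ∑ l ∈ range (N + 1), ∑ k ∈ range l, r ^ (l - k) ≤ 2 * N * (1 - r)⁻¹ := by
  have : 0 ≤ (1 - r)⁻¹ := inv_nonneg.2 (sub_nonneg.2 hr1.le)
  have hN2 : ((N + 1 : ℕ) : ℝ) ≤ 2 * N := by exact_mod_cast (by lia : N + 1 ≤ 2 * N)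
  calc ∑ l ∈ range (N + 1), ∑ k ∈ range l, r ^ (l - k) ≤ (N + 1 : ℕ) * (1 - r)⁻¹ := by
        simpa using sum_le_sum fun l (_ : l ∈ range (N + 1)) => sum_range_pow_sub_le hr0 hr1 l
    _ ≤ 2 * N * (1 - r)⁻¹ := by gcongr

lemma mul_rpow_rpow_one_div {α a b : ℝ} (hα : 1 + α ≠ 0) (ha : 0 ≤ a) (hb : 0 < b) :
    (a * b ^ α) ^ (1 / (1 + α)) = (a / b) ^ (1 / (1 + α)) * b := by
  have hab : a * b ^ α = a / b * b ^ (1 + α) := by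
    rw [Real.rpow_add hb, Real.rpow_one, ← mul_assoc, div_mul_cancel₀ _ hb.ne']
  rw [hab, Real.mul_rpow (by positivity) (by positivity), one_div, Real.rpow_rpow_inv hb.le hα]

/-- The maximal function `sup_{n > M_N} |t_n a| / log^{1+α}(n+1)` of the Nörlund means of `a`. -/
def norlundMax (m : ℕ → ℕ) (q : ℕ → ℝ) (μ : Measure (G m)) (α : ℝ) (N : ℕ) (a : G m → ℂ)
    (x : G m) : ℝ≥0∞ :=
  ⨆ n : ℕ, ⨆ _ : MM m N < n,
    (‖fT m q μ a n x‖₊ : ℝ≥0∞) / ENNReal.ofReal (Real.log (n + 1) ^ (1 + α))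

variable {m : ℕ → ℕ} [∀ n, (m n).AtLeastTwo] {q : ℕ → ℝ} {μ : Measure (G m)} {a : G m → ℂ}
  {α : ℝ} {x : G m} {N k l : ℕ}

lemma natCast_mul_log_two_le_log {n : ℕ} (hn : MM m N < n) :
    N * Real.log 2 ≤ Real.log (n + 1) := by
  rw [← Real.log_pow]
  refine Real.log_le_log (by positivity) ?_
  have : 2 ^ N ≤ n + 1 := ((two_pow_le_MM N).trans hn.le).trans n.le_succ
  exact_mod_cast this

lemma norlundMax_le (hα : 0 ≤ 1 + α) (hN : 0 < N) {E : ℝ}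
    (hE : ∀ n, MM m N < n → ‖fT m q μ a n x‖ ≤ E) :
    norlundMax m q μ α N a x ≤ ENNReal.ofReal (E / (N * Real.log 2) ^ (1 + α)) := by
  have hlog : 0 < N * Real.log 2 := mul_pos (mod_cast hN) (Real.log_pos one_lt_two)
  refine iSup₂_le fun n hn => ?_
  rw [ENNReal.ofReal_div_of_pos (Real.rpow_pos_of_pos hlog _)]
  refine ENNReal.div_le_div ?_ (ENNReal.ofReal_le_ofReal ?_)
  · simpa only [ofReal_norm] using! ENNReal.ofReal_le_ofReal (hE n hn)
  · exact Real.rpow_le_rpow hlog.le (natCast_mul_log_two_le_log hn) hα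

lemma norlundMax_rpow_le (hα : 0 < 1 + α) (hN : 0 < N) (hkl : k ≤ l) {A : ℝ} (hA : 0 ≤ A)
    (hfT : ∀ n, MM m N < n → ‖fT m q μ a n x‖ ≤ A * (MM m k * (MM m l : ℝ) ^ α)) :
    norlundMax m q μ α N a x ^ (1 / (1 + α)) ≤
      ENNReal.ofReal (A ^ (1 / (1 + α)) / (N * Real.log 2) *
        ((1 / 2 : ℝ) ^ (1 / (1 + α))) ^ (l - k) * MM m l) := by
  set p := 1 / (1 + α) with hp
  have hp0 : 0 ≤ p := by positivity
  have hMl : (0 : ℝ) < MM m l := cast_MM_pos l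
  have hlog : 0 < N * Real.log 2 := mul_pos (mod_cast hN) (Real.log_pos one_lt_two)
  have hratio : (MM m k : ℝ) / MM m l ≤ (1 / 2) ^ (l - k) := by
    rw [div_le_iff₀ hMl, one_div, inv_pow, ← div_eq_inv_mul, le_div_iff₀' (by positivity)]
    exact_mod_cast two_pow_mul_MM_le hkl
  refine (ENNReal.rpow_le_rpow (norlundMax_le hα.le hN hfT) hp0).trans ?_
  rw [ENNReal.ofReal_rpow_of_nonneg (by positivity) hp0]
  refine ENNReal.ofReal_le_ofReal ?_
  calc (A * (MM m k * (MM m l : ℝ) ^ α) / (N * Real.log 2) ^ (1 + α)) ^ p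
      = (A * MM m k * (MM m l : ℝ) ^ α) ^ p / (N * Real.log 2) := by
        rw [Real.div_rpow (by positivity) (by positivity), ← mul_assoc, hp, one_div,
          Real.rpow_rpow_inv hlog.le hα.ne']
    _ = (A * (MM m k / MM m l)) ^ p * MM m l / (N * Real.log 2) := by
        rw [mul_rpow_rpow_one_div hα.ne' (by positivity) hMl, mul_div_assoc A]
    _ ≤ (A * (1 / 2) ^ (l - k)) ^ p * MM m l / (N * Real.log 2) := by gcongr
    _ = _ := by
        rw [Real.mul_rpow hA (by positivity), Real.rpow_pow_comm (by norm_num)]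
        ring

/- On each shell the integral is at most a constant times `2 ^ (-(l - k) / (1 + α)) / N`, so that
the sum over `k < l ≤ N` is bounded. -/
lemma setLIntegral_norlundMax_rpow_le {B : ℕ}
    (hμ : ∀ (n : ℕ) (x : G m), μ (cyl m n x) = ((MM m n : ℝ≥0∞))⁻¹) (hB : ∀ n, m n ≤ B)
    (hα : 0 < 1 + α) (hN : 0 < N) {A : ℝ} (hA : 0 ≤ A)
    (hfT : ∀ k l, k < l → l ≤ N → ∀ x ∈ shell m N k l, ∀ n, MM m N < n →
      ‖fT m q μ a n x‖ ≤ A * (MM m k * (MM m l : ℝ) ^ α)) :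
    ∫⁻ x in (cyl m N 0)ᶜ, norlundMax m q μ α N a x ^ (1 / (1 + α)) ∂μ ≤
      ENNReal.ofReal (2 * (A ^ (1 / (1 + α)) * B / Real.log 2) *
        (1 - (1 / 2 : ℝ) ^ (1 / (1 + α)))⁻¹) := by
  set p := 1 / (1 + α)
  have hp0 : 0 < p := by positivity
  set r : ℝ := (1 / 2) ^ p
  have hr0 : 0 ≤ r := by positivity
  have hr1 : r < 1 := Real.rpow_lt_one (by norm_num) (by norm_num) hp0
  have hpoint : ∀ i ∈ (range (N + 1)).sigma fun l => range l, ∀ x ∈ shell m N i.2 i.1,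
      norlundMax m q μ α N a x ^ p ≤
        ENNReal.ofReal (A ^ p / (N * Real.log 2) * r ^ (i.1 - i.2) * MM m i.1) := by
    intro i hi x hx
    obtain ⟨hlN, hkl⟩ := mem_sigma.1 hi
    rw [mem_range] at hkl
    exact norlundMax_rpow_le hα hN hkl.le hA (hfT _ _ hkl (mem_range_succ_iff.1 hlN) x hx)
  calc ∫⁻ x in (cyl m N 0)ᶜ, norlundMax m q μ α N a x ^ p ∂μ
      ≤ ∑ i ∈ (range (N + 1)).sigma fun l => range l,
          ENNReal.ofReal (A ^ p / (N * Real.log 2) * r ^ (i.1 - i.2) * MM m i.1) *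
            μ (shell m N i.2 i.1) :=
        setLIntegral_le_sum_mul_measure compl_cyl_subset_iUnion_shell hpoint
    _ ≤ ∑ i ∈ (range (N + 1)).sigma fun l => range l,
          ENNReal.ofReal (A ^ p / (N * Real.log 2) * r ^ (i.1 - i.2) * B) :=
        sum_le_sum fun i _ => ofReal_mul_MM_mul_measure_shell_le hμ hB (by positivity)
    _ = ENNReal.ofReal (A ^ p * B / (N * Real.log 2) *
          ∑ l ∈ range (N + 1), ∑ k ∈ range l, r ^ (l - k)) := by
        rw [← ENNReal.ofReal_sum_of_nonneg fun i _ => by positivity, sum_sigma]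
        simp only [mul_sum]
        congr! 3
        ring
    _ ≤ ENNReal.ofReal (A ^ p * B / (N * Real.log 2) * (2 * N * (1 - r)⁻¹)) := by
        gcongr
        exact sum_sum_range_pow_sub_le hr0 hr1 hN
    _ = ENNReal.ofReal (2 * (A ^ p * B / Real.log 2) * (1 - r)⁻¹) := by
        congr 1
        field_simp

lemma norm_fT_le_of_mem_shell [IsFiniteMeasure μ] {B : ℕ} {C : ℝ}
    (hμ : ∀ (n : ℕ) (x : G m), μ (cyl m n x) = ((MM m n : ℝ≥0∞))⁻¹) (hB : ∀ n, m n ≤ B)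
    (hα : 0 ≤ α) (hq0 : 0 < q 0) (hq : ∀ n, 0 ≤ q n) (hqm : Antitone q)
    (hC : ∀ j n : ℕ, 0 < j → j ≤ n → Q q j ≤ C * ((j : ℝ) / n) ^ α * Q q n)
    (ha : Measurable a) (hsupp : Function.support a ⊆ cyl m N 0)
    (hbound : eLpNorm a ⊤ μ ≤ ENNReal.ofReal ((MM m N : ℝ) ^ (1 + α)))
    (hkl : k < l) (hlN : l ≤ N) (hx : x ∈ shell m N k l) {n : ℕ} (hn : MM m N ≤ n) :
    ‖fT m q μ a n x‖ ≤ B * (1 + 2 * B) * C * (MM m k * (MM m l : ℝ) ^ α) := by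
  have hMN : (0 : ℝ) < MM m N := cast_MM_pos N
  have hkernel : ∀ t ∈ cyl m N 0, ‖F m q n (x - t)‖ ≤
      B * (1 + 2 * B) * C * (MM m k * ((MM m l : ℝ) / MM m N) ^ α) := fun t ht =>
    norm_F_le_of_mem_shell hB hα hq0 hq hqm hC hkl hlN (sub_mem_shell hkl hlN hx ht) hn
  refine (norm_fT_le ha (by positivity) hbound (measurableSet_cyl N 0) hsupp hkernel).trans_eq ?_
  rw [Measure.real, hμ, ENNReal.toReal_inv, ENNReal.toReal_natCast,
    Real.div_rpow (by positivity) hMN.le, Real.rpow_add hMN, Real.rpow_one]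
  field_simp

end MaximalFunction

theorem statement19_general
    (m : ℕ → ℕ) (hm : ∀ n, 2 ≤ m n) (hmb : ∃ B, ∀ n, m n ≤ B)
    (μ : Measure (G m)) [IsFiniteMeasure μ]
    (hμ : ∀ (n : ℕ) (x : G m), μ (cyl m n x) = ((MM m n : ℝ≥0∞))⁻¹)
    (α : ℝ) (hα : 0 ≤ α)
    (q : ℕ → ℝ) (hq0 : 0 < q 0) (hqnn : ∀ n, 0 ≤ q n) (hqmono : Antitone q)
    (hQ : ∃ C : ℝ, ∀ j n : ℕ, 0 < j → j ≤ n → Q q j ≤ C * ((j : ℝ) / n) ^ α * Q q n) :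
    ∃ c : ℝ≥0, ∀ N : ℕ, ∀ a : G m → ℂ, Measurable a →
      Function.support a ⊆ cyl m N 0 →
      eLpNorm a ⊤ μ ≤ ENNReal.ofReal ((MM m N : ℝ) ^ (1 + α)) →
      ∫⁻ x in (cyl m N 0)ᶜ, norlundMax m q μ α N a x ^ (1 / (1 + α)) ∂μ ≤ (c : ℝ≥0∞) := by
  obtain ⟨B, hB⟩ := hmb
  obtain ⟨C, hC⟩ := hQ
  have : ∀ n, (m n).AtLeastTwo := fun n => ⟨hm n⟩
  have hC1 : 1 ≤ C := one_le_of_Q_le_mul_rpow hq0 hC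
  set A : ℝ := B * (1 + 2 * B) * C
  refine ⟨Real.toNNReal (2 * (A ^ (1 / (1 + α)) * B / Real.log 2) *
    (1 - (1 / 2 : ℝ) ^ (1 / (1 + α)))⁻¹), fun N a ha hsupp hbound => ?_⟩
  rcases N.eq_zero_or_pos with rfl | hN
  · simp [cyl]
  · exact setLIntegral_norlundMax_rpow_le hμ hB (by positivity) hN (by positivity)
      fun k l hkl hlN x hx n hn =>
        norm_fT_le_of_mem_shell hμ hB hα hq0 hqnn hqmono hC ha hsupp hbound hkl hlN hx hn.le

/-- Let `0 < α ≤ 1` and let `{q_n}` be a non-increasing sequence of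
non-negative reals with `q_0 > 0` satisfying `n^α/Q_n = O(1)` and
`(q_n - q_{n+1})/n^{α-2} = O(1)`. Then there is a constant `c_α` such that for every `N` and
every `1/(1+α)`-atom `a` with support `I_N`:
`∫_{G_m ∖ I_N} ( sup_{n > M_N} |t_n a(x)| / log^{1+α}(n+1) )^{1/(1+α)} dμ(x) ≤ c_α`. -/
theorem statement19
    (m : ℕ → ℕ) (hm : ∀ n, 2 ≤ m n) (hmb : ∃ B, ∀ n, m n ≤ B)
    (μ : Measure (G m)) [IsProbabilityMeasure μ]
    (hμ : ∀ (n : ℕ) (x : G m), μ (cyl m n x) = ((MM m n : ℝ≥0∞))⁻¹)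
    (α : ℝ) (hα0 : 0 < α) (hα1 : α ≤ 1)
    (q : ℕ → ℝ) (hq0 : 0 < q 0) (hqnn : ∀ n, 0 ≤ q n) (hqmono : ∀ n, q (n + 1) ≤ q n)
    (hQ : (fun n : ℕ => (n : ℝ) ^ α / Q q n) =O[atTop] (fun _ => (1 : ℝ)))
    (hq' : (fun n : ℕ => (q n - q (n + 1)) / (n : ℝ) ^ (α - 2)) =O[atTop] (fun _ => (1 : ℝ))) :
    ∃ c : ℝ≥0, ∀ N : ℕ, ∀ a : G m → ℂ, Measurable a →
      Function.support a ⊆ cyl m N 0 →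
      (∫ x in cyl m N 0, a x ∂μ) = 0 →
      eLpNorm a ⊤ μ ≤ ENNReal.ofReal ((MM m N : ℝ) ^ (1 + α)) →
      ∫⁻ x in (cyl m N 0)ᶜ,
          (⨆ n : ℕ, ⨆ (_ : MM m N < n),
            (‖fT m q μ a n x‖₊ : ℝ≥0∞) / ENNReal.ofReal (Real.log (n + 1) ^ (1 + α)))
            ^ (1 / (1 + α)) ∂μ ≤ (c : ℝ≥0∞) := by
  have hQratio := exists_Q_le_mul_rpow hα0 hα1 hq0 hqnn (antitone_nat_of_succ_le hqmono) hQ hq'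
  obtain ⟨c, hc⟩ := statement19_general m hm hmb μ hμ α hα0.le q hq0 hqnn
    (antitone_nat_of_succ_le hqmono) hQratio
  exact ⟨c, fun N a ha hsupp _ hbound => hc N a ha hsupp hbound⟩

end Vilenkin
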